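/- arXiv:2112.08456 — 3 statements merged into one kernel-verified Lean document; each statement's English description precedes it below -/
import Mathlib

section
/- Let P be a set of n ≥ 5 points in the plane in convex position. Then the edge set of the complete geometric graph K(P) can be partitioned into ⌈n/3⌉ classes such that each class, viewed as a geometric graph on P, is 1-plane (each edge crosses at most 1 other edge of its class). -/
/-- Points of the plane. -/
abbrev Pt : Type := ℝ × ℝ

/-- A finite point set is in general position if no three of its points are collinear. -/
def GenPos (P : Finset Pt) : Prop :=
  ∀ p ∈ P, ∀ q ∈ P, ∀ r ∈ P, p ≠ q → p ≠ r → q ≠ r →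
    ¬ Collinear ℝ ({p, q, r} : Set Pt)

/-- A finite point set is in convex position: general position and no point lies in the
convex hull of the others. -/
def ConvexPos (P : Finset Pt) : Prop :=
  GenPos P ∧ ∀ p ∈ P, p ∉ convexHull ℝ ((P.erase p : Finset Pt) : Set Pt)

/-- The edge set of the complete geometric graph on `P`: all unordered pairs of
distinct points of `P`. -/
def KEdges (P : Finset Pt) : Set (Sym2 Pt) :=
  {e | ∃ p ∈ P, ∃ q ∈ P, p ≠ q ∧ e = s(p, q)}

/-- Two edges cross: they share no endpoint and their open segments intersect. -/
def Cross (e f : Sym2 Pt) : Prop :=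
  (∀ x, x ∈ e → x ∉ f) ∧
    ∃ p q r s : Pt, e = s(p, q) ∧ f = s(r, s) ∧
      (openSegment ℝ p q ∩ openSegment ℝ r s).Nonempty

/-- A set of edges is `k`-plane if each of its edges crosses at most `k` other edges
of the set. -/
def KPlane (k : ℕ) (E : Set (Sym2 Pt)) : Prop :=
  ∀ e ∈ E, {f | f ∈ E ∧ Cross e f}.ncard ≤ k

/-- A set of edges is `k`-quasi-plane if it contains no `k` pairwise crossing edges. -/
def KQuasiPlane (k : ℕ) (E : Set (Sym2 Pt)) : Prop :=
  ¬ ∃ S : Finset (Sym2 Pt), ↑S ⊆ E ∧ S.card = k ∧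
      (S : Set (Sym2 Pt)).Pairwise Cross

/-- The set of crossing pairs (unordered) of a set of edges. -/
def CrossPairs (E : Set (Sym2 Pt)) : Set (Sym2 (Sym2 Pt)) :=
  {c | ∃ e ∈ E, ∃ f ∈ E, Cross e f ∧ c = s(e, f)}

/-- A crossing family in `K(P)`: a finite set of pairwise crossing edges of `K(P)`. -/
def CrossingFamily (P : Finset Pt) (S : Finset (Sym2 Pt)) : Prop :=
  ↑S ⊆ KEdges P ∧ (S : Set (Sym2 Pt)).Pairwise Cross

/-- `E` forms a spanning tree on the point set `P`: all edges are edges of `K(P)` and the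
corresponding graph on the points of `P` is connected and acyclic. -/
def IsSpanningTreeOn (P : Finset Pt) (E : Set (Sym2 Pt)) : Prop :=
  E ⊆ KEdges P ∧
    (SimpleGraph.fromRel (fun a b : {x // x ∈ P} => s((a : Pt), (b : Pt)) ∈ E)).IsTree

/-- Twice the signed area of the triangle `p q r`. -/
def ori (p q r : Pt) : ℝ := (q.1 - p.1) * (r.2 - p.2) - (q.2 - p.2) * (r.1 - p.1)

lemma ori_ne_zero {p q r : Pt} (hpq : p ≠ q) (h : ¬ Collinear ℝ ({p, q, r} : Set Pt)) :
    ori p q r ≠ 0 := by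
  intro h0
  apply h
  rw [collinear_iff_of_mem (p₀ := p) (by simp)]
  refine ⟨q - p, ?_⟩
  have key : ∃ t : ℝ, r = t • (q - p) +ᵥ p := by
    unfold ori at h0
    by_cases hx : q.1 - p.1 = 0
    · have hy : q.2 - p.2 ≠ 0 := by
        intro hy
        exact hpq (Prod.ext (by linarith) (by linarith))
      refine ⟨(r.2 - p.2) / (q.2 - p.2), Prod.ext ?_ ?_⟩
      · simp only [vadd_eq_add, Prod.fst_add, Prod.smul_fst, Prod.fst_sub, smul_eq_mul]
        field_simp
        linarith
      · simp only [vadd_eq_add, Prod.snd_add, Prod.smul_snd, Prod.snd_sub, smul_eq_mul]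
        field_simp
        ring
    · refine ⟨(r.1 - p.1) / (q.1 - p.1), Prod.ext ?_ ?_⟩
      · simp only [vadd_eq_add, Prod.fst_add, Prod.smul_fst, Prod.fst_sub, smul_eq_mul]
        field_simp
        ring
      · simp only [vadd_eq_add, Prod.snd_add, Prod.smul_snd, Prod.snd_sub, smul_eq_mul]
        field_simp
        linarith
  rintro x (rfl | rfl | rfl)
  · exact ⟨0, by simp⟩
  · exact ⟨1, by simp⟩
  · exact key

/-- Points strictly on the same side of the line `a b` span a segment missing `a b`. -/
lemma no_meet {a b c d : Pt} (h : 0 < ori a b c * ori a b d) :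
    ¬ (openSegment ℝ a b ∩ openSegment ℝ c d).Nonempty := by
  rintro ⟨x, ⟨u, v, hu, hv, huv, rfl⟩, ⟨s, t, hs, ht, hst, hx⟩⟩
  have h1 := congrArg Prod.fst hx
  have h2 := congrArg Prod.snd hx
  simp only [Prod.fst_add, Prod.smul_fst, Prod.snd_add, Prod.smul_snd, smul_eq_mul] at h1 h2
  have hz : s * ori a b c + t * ori a b d = 0 := by
    unfold ori
    obtain rfl : u = 1 - v := by linarith
    obtain rfl : s = 1 - t := by linarith
    linear_combination (b.1 - a.1) * h2 - (b.2 - a.2) * h1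
  rcases pos_and_pos_or_neg_and_neg_of_mul_pos h with ⟨hc, hd⟩ | ⟨hc, hd⟩
  · nlinarith [mul_pos hs hc, mul_pos ht hd]
  · nlinarith [mul_neg_of_pos_of_neg hs hc, mul_neg_of_pos_of_neg ht hd]

/-- Barycentric coordinates: a point of convex position cannot be inside a triangle. -/
lemma ori_pos_of_star {P : Finset Pt} (hP : ConvexPos P) {o a b c : Pt} (ho : o ∈ P)
    (ha : a ∈ P) (hc : c ∈ P) (hb : b ∈ P) (hob : o ≠ b) (hab : a ≠ b) (hcb : c ≠ b)
    (h1 : 0 < ori o a b) (h2 : 0 < ori o b c) (h3 : 0 < ori o a c) : 0 < ori a b c := by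
  by_contra hneg
  push Not at hneg
  apply hP.2 b hb
  have hsum : ori o a b + ori o b c + -ori a b c = ori o a c := by unfold ori; ring
  have hconv := convex_convexHull ℝ ((P.erase b : Finset Pt) : Set Pt)
  have mem : ∀ x ∈ P, x ≠ b → x ∈ convexHull ℝ ((P.erase b : Finset Pt) : Set Pt) := by
    intro x hx hxb
    exact subset_convexHull ℝ _ (by simp [hx, hxb])
  have hh := hconv.sum_mem (t := Finset.univ)
    (w := ![-ori a b c / ori o a c, ori o b c / ori o a c, ori o a b / ori o a c])
    (z := ![o, a, c])
    (by
      intro i _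
      fin_cases i
      · exact div_nonneg (by linarith) h3.le
      · exact div_nonneg h2.le h3.le
      · exact div_nonneg h1.le h3.le)
    (by
      simp only [Fin.sum_univ_three, Matrix.cons_val]
      field_simp
      linarith)
    (by
      intro i _
      fin_cases i
      · exact mem o ho hob
      · exact mem a ha hab
      · exact mem c hc hcb)
  convert hh using 1
  simp only [Fin.sum_univ_three, Matrix.cons_val]
  have h3' := h3.ne'
  apply Prod.ext
  · simp only [Prod.fst_add, Prod.smul_fst, smul_eq_mul]
    field_simp
    unfold ori
    ring
  · simp only [Prod.snd_add, Prod.smul_snd, smul_eq_mul]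
    field_simp
    unfold ori
    ring

lemma ori_trans {o a b c : Pt} (ha : o.1 < a.1 ∨ o.1 = a.1 ∧ o.2 < a.2)
    (hb : o.1 < b.1 ∨ o.1 = b.1 ∧ o.2 < b.2) (hc : o.1 < c.1 ∨ o.1 = c.1 ∧ o.2 < c.2)
    (h1 : 0 < ori o a b) (h2 : 0 < ori o b c) : 0 < ori o a c := by
  unfold ori at *
  obtain ⟨o1, o2⟩ := o
  obtain ⟨a1, a2⟩ := a
  obtain ⟨b1, b2⟩ := b
  obtain ⟨c1, c2⟩ := c
  simp only at *
  obtain ⟨u1, rfl⟩ : ∃ u, a1 = u + o1 := ⟨a1 - o1, by ring⟩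
  obtain ⟨u2, rfl⟩ : ∃ u, a2 = u + o2 := ⟨a2 - o2, by ring⟩
  obtain ⟨v1, rfl⟩ : ∃ u, b1 = u + o1 := ⟨b1 - o1, by ring⟩
  obtain ⟨v2, rfl⟩ : ∃ u, b2 = u + o2 := ⟨b2 - o2, by ring⟩
  obtain ⟨w1, rfl⟩ : ∃ u, c1 = u + o1 := ⟨c1 - o1, by ring⟩
  obtain ⟨w2, rfl⟩ : ∃ u, c2 = u + o2 := ⟨c2 - o2, by ring⟩
  simp only [add_sub_cancel_right, lt_add_iff_pos_left, right_eq_add] at *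
  have hu : 0 ≤ u1 := by rcases ha with h | h <;> linarith
  have hw : 0 ≤ w1 := by rcases hc with h | h <;> linarith
  rcases hb with hv | ⟨hv, hv2⟩
  · have hid : v1 * (u1 * w2 - u2 * w1) = u1 * (v1 * w2 - v2 * w1) + w1 * (u1 * v2 - u2 * v1) := by
      ring
    have : 0 < v1 * (u1 * w2 - u2 * w1) := by
      rw [hid]
      rcases ha with h | ⟨h, h'⟩
      · have := mul_pos h h2
        have := mul_nonneg hw h1.le
        linarith
      · subst h
        nlinarith [mul_pos h' hv]
    exact pos_of_mul_pos_right this hv.le |>.trans_le le_rfl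
  · subst hv
    nlinarith [mul_nonneg hv2.le hw]

lemma exists_idx (P : Finset Pt) (hP : ConvexPos P) (hne : P.Nonempty) :
    ∃ idx : Pt → ℕ, (∀ p ∈ P, idx p < P.card) ∧
      (∀ p ∈ P, ∀ q ∈ P, idx p = idx q → p = q) ∧
      (∀ a ∈ P, ∀ b ∈ P, ∀ c ∈ P, idx a < idx b → idx b < idx c → 0 < ori a b c) := by
  classical
  obtain ⟨o, ho, hmin⟩ := Finset.exists_min_image P (fun p => toLex p) hne
  have hlex : ∀ q ∈ P, q ≠ o → o.1 < q.1 ∨ o.1 = q.1 ∧ o.2 < q.2 := by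
    intro q hq hqo
    have h := hmin q hq
    rw [Prod.Lex.toLex_le_toLex] at h
    rcases h with h | ⟨h, h'⟩
    · exact Or.inl h
    · refine Or.inr ⟨h, lt_of_le_of_ne h' fun h'' => hqo (Prod.ext h.symm h''.symm)⟩
  let B : Pt → Pt → Prop := fun q r => r ≠ o ∧ (q = o ∨ 0 < ori o q r)
  have hirr : ∀ q, ¬ B q q := by
    rintro q ⟨h1, h2 | h2⟩
    · exact h1 h2
    · unfold ori at h2
      nlinarith
  have hz : ∀ r, ori o r o = 0 := by intro r; unfold ori; ring
  have hz' : ∀ r, ori o o r = 0 := by intro r; unfold ori; ring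
  have htr : ∀ a ∈ P, ∀ b ∈ P, ∀ c ∈ P, B a b → B b c → B a c := by
    rintro a ha b hb c hc ⟨h1, h2⟩ ⟨h3, h4⟩
    refine ⟨h3, ?_⟩
    by_cases hao : a = o
    · exact Or.inl hao
    · exact Or.inr (ori_trans (hlex a ha hao) (hlex b hb h1) (hlex c hc h3)
        (h2.resolve_left hao) (h4.resolve_left h1))
  have htri : ∀ a ∈ P, ∀ b ∈ P, a ≠ b → B a b ∨ B b a := by
    intro a ha b hb hab
    by_cases hao : a = o
    · exact Or.inl ⟨fun h => hab (hao.trans h.symm), Or.inl hao⟩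
    by_cases hbo : b = o
    · exact Or.inr ⟨hao, Or.inl hbo⟩
    have h := ori_ne_zero (Ne.symm hao) (hP.1 o ho a ha b hb (Ne.symm hao) (Ne.symm hbo) hab)
    have hs : ori o b a = - ori o a b := by unfold ori; ring
    rcases lt_or_gt_of_ne h with h | h
    · exact Or.inr ⟨hao, Or.inr (by linarith)⟩
    · exact Or.inl ⟨hbo, Or.inr h⟩
  let idx : Pt → ℕ := fun q => (P.filter (fun r => B r q)).card
  have hmono : ∀ a ∈ P, ∀ b ∈ P, B a b → idx a < idx b := by
    intro a ha b hb hab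
    apply Finset.card_lt_card
    rw [Finset.ssubset_iff_of_subset]
    · exact ⟨a, by simp [ha, hab], by simp [hirr]⟩
    · intro x hx
      rw [Finset.mem_filter] at hx ⊢
      exact ⟨hx.1, htr x hx.1 a ha b hb hx.2 hab⟩
  have hlt : ∀ a ∈ P, ∀ b ∈ P, idx a < idx b → B a b := by
    intro a ha b hb h
    have hab : a ≠ b := by rintro rfl; exact lt_irrefl _ h
    rcases htri a ha b hb hab with h' | h'
    · exact h'
    · exact absurd (hmono b hb a ha h') (by omega)
  refine ⟨idx, ?_, ?_, ?_⟩
  · intro p hp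
    apply Finset.card_lt_card
    rw [Finset.ssubset_iff_of_subset (Finset.filter_subset _ _)]
    exact ⟨p, hp, by simp [hirr]⟩
  · intro p hp q hq h
    by_contra hpq
    rcases htri p hp q hq hpq with h' | h'
    · exact absurd (hmono p hp q hq h') (by omega)
    · exact absurd (hmono q hq p hp h') (by omega)
  · intro a ha b hb c hc hab hbc
    have h1 := hlt a ha b hb hab
    have h2 := hlt b hb c hc hbc
    have h3 := hlt a ha c hc (hab.trans hbc)
    have nab : a ≠ b := by rintro rfl; exact hirr _ h1
    have nbc : b ≠ c := by rintro rfl; exact hirr _ h2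
    by_cases hao : a = o
    · subst hao
      exact h2.2.resolve_left h1.1
    · exact ori_pos_of_star hP ho ha hc hb (Ne.symm h1.1) nab nbc.symm
        (h1.2.resolve_left hao) (h2.2.resolve_left h1.1) (h3.2.resolve_left hao)

/-- `k l` interleave with `i j` on the circle. -/
def Interleave (i j k l : ℕ) : Prop :=
  (i < k ∧ k < j ∧ (l < i ∨ j < l)) ∨ (i < l ∧ l < j ∧ (k < i ∨ j < k))

lemma mod_cases {n a b : ℕ} (ha : a < n) (hb : b < n) :
    (a + b < n ∧ (a + b) % n = a + b) ∨ (n ≤ a + b ∧ (a + b) % n = a + b - n) := by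
  rcases lt_or_ge (a + b) n with h | h
  · exact Or.inl ⟨h, Nat.mod_eq_of_lt h⟩
  · refine Or.inr ⟨h, ?_⟩
    rw [Nat.mod_eq_sub_mod h, Nat.mod_eq_of_lt (by omega)]

/-- In three consecutive parallel classes, an edge crosses at most one other. -/
lemma inter_unique_aux {n i j k l k' l' : ℕ} (hj : j < n) (hij : i < j)
    (hl : l < n) (hl' : l' < n)
    (hk : i < k ∧ k < j ∧ (l < i ∨ j < l)) (hk' : i < k' ∧ k' < j ∧ (l' < i ∨ j < l'))
    (h : (i + j) % n / 3 = (k + l) % n / 3) (h' : (i + j) % n / 3 = (k' + l') % n / 3) :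
    k = k' ∧ l = l' := by
  have e1 := mod_cases (show i < n by omega) hj
  have e2 := mod_cases (show k < n by omega) hl
  have e3 := mod_cases (show k' < n by omega) hl'
  generalize (i + j) % n = S at *
  generalize (k + l) % n = T at *
  generalize (k' + l') % n = T' at *
  omega

lemma inter_unique {n i j k l k' l' : ℕ} (hj : j < n) (hij : i < j)
    (hk : k < n) (hl : l < n) (hk' : k' < n) (hl' : l' < n)
    (hI : Interleave i j k l) (hI' : Interleave i j k' l')
    (h : (i + j) % n / 3 = (k + l) % n / 3) (h' : (i + j) % n / 3 = (k' + l') % n / 3) :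
    (k = k' ∧ l = l') ∨ (k = l' ∧ l = k') := by
  rcases hI with hI | hI <;> rcases hI' with hI' | hI'
  · exact Or.inl (inter_unique_aux hj hij hl hl' hI hI' h h')
  · rw [add_comm k'] at h'
    exact Or.inr (inter_unique_aux hj hij hl hk' hI hI' h h')
  · rw [add_comm k] at h
    exact Or.inr (inter_unique_aux hj hij hk hl' hI hI' h h').symm
  · rw [add_comm k] at h
    rw [add_comm k'] at h'
    exact Or.inl (inter_unique_aux hj hij hk hk' hI hI' h h').symm

/-- Crossing edges interleave. -/
lemma cross_inter {P : Finset Pt} {idx : Pt → ℕ}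
    (hinj : ∀ p ∈ P, ∀ q ∈ P, idx p = idx q → p = q)
    (hori : ∀ a ∈ P, ∀ b ∈ P, ∀ c ∈ P, idx a < idx b → idx b < idx c → 0 < ori a b c)
    {a b c d : Pt} (ha : a ∈ P) (hb : b ∈ P) (hc : c ∈ P) (hd : d ∈ P)
    (hab : idx a < idx b) (hX : Cross s(a, b) s(c, d)) :
    Interleave (idx a) (idx b) (idx c) (idx d) := by
  obtain ⟨hdis, p, q, r, s, e1, e2, hne⟩ := hX
  have hmeet : (openSegment ℝ a b ∩ openSegment ℝ c d).Nonempty := by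
    have h1 : openSegment ℝ p q = openSegment ℝ a b := by
      rcases Sym2.eq_iff.1 e1 with ⟨rfl, rfl⟩ | ⟨rfl, rfl⟩
      · rfl
      · exact openSegment_symm _ _ _
    have h2 : openSegment ℝ r s = openSegment ℝ c d := by
      rcases Sym2.eq_iff.1 e2 with ⟨rfl, rfl⟩ | ⟨rfl, rfl⟩
      · rfl
      · exact openSegment_symm _ _ _
    rwa [h1, h2] at hne
  have hda := hdis a (by simp)
  have hdb := hdis b (by simp)
  simp only [Sym2.mem_iff, not_or] at hda hdb
  have nac : idx a ≠ idx c := fun h => hda.1 (hinj a ha c hc h)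
  have nad : idx a ≠ idx d := fun h => hda.2 (hinj a ha d hd h)
  have nbc : idx b ≠ idx c := fun h => hdb.1 (hinj b hb c hc h)
  have nbd : idx b ≠ idx d := fun h => hdb.2 (hinj b hb d hd h)
  have hin : ∀ x ∈ P, idx a < idx x → idx x < idx b → ori a b x < 0 := by
    intro x hx h1 h2
    have := hori a ha x hx b hb h1 h2
    have hs : ori a b x = - ori a x b := by unfold ori; ring
    linarith
  have hout : ∀ x ∈ P, (idx x < idx a ∨ idx b < idx x) → 0 < ori a b x := by
    rintro x hx (h | h)
    · have := hori x hx a ha b hb h hab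
      have hs : ori a b x = ori x a b := by unfold ori; ring
      linarith
    · exact hori a ha b hb x hx hab h
  by_contra hI
  unfold Interleave at hI
  by_cases h1 : idx a < idx c ∧ idx c < idx b
  · have h2 : idx a < idx d ∧ idx d < idx b := by omega
    exact no_meet (mul_pos_of_neg_of_neg (hin c hc h1.1 h1.2) (hin d hd h2.1 h2.2)) hmeet
  · have h2 : idx d < idx a ∨ idx b < idx d := by omega
    exact no_meet (mul_pos (hout c hc (by omega)) (hout d hd h2)) hmeet

/-- For `n ≥ 5` points in convex position, `K(P)` can be partitioned into
`⌈n/3⌉` classes each of which is 1-plane. -/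
theorem stmt_0 (n : ℕ) (hn : 5 ≤ n) (P : Finset Pt) (hP : ConvexPos P) (hcard : P.card = n) :
    ∃ F : Fin (⌈(n : ℝ) / 3⌉₊) → Set (Sym2 Pt),
      (⋃ i, F i) = KEdges P ∧
      (Pairwise fun i j => Disjoint (F i) (F j)) ∧
      (∀ i, KPlane 1 (F i)) := by
  classical
  obtain ⟨idx, hlt, hinj, hori⟩ := exists_idx P hP (Finset.card_pos.1 (by omega))
  rw [hcard] at hlt
  refine ⟨fun i => {e | ∃ p ∈ P, ∃ q ∈ P, p ≠ q ∧ e = s(p, q) ∧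
    (idx p + idx q) % n / 3 = (i : ℕ)}, ?_, ?_, ?_⟩
  · ext e
    simp only [Set.mem_iUnion, Set.mem_ofPred_eq, KEdges]
    constructor
    · rintro ⟨i, p, hp, q, hq, hpq, he, _⟩
      exact ⟨p, hp, q, hq, hpq, he⟩
    · rintro ⟨p, hp, q, hq, hpq, he⟩
      have hm : (idx p + idx q) % n < n := Nat.mod_lt _ (by omega)
      refine ⟨⟨(idx p + idx q) % n / 3, ?_⟩, p, hp, q, hq, hpq, he, rfl⟩
      rw [Nat.lt_ceil, lt_div_iff₀ (by norm_num)]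
      have h3 : (idx p + idx q) % n / 3 * 3 < n := by omega
      exact_mod_cast h3
  · intro i j hij
    rw [Set.disjoint_left]
    rintro e ⟨p, hp, q, hq, hpq, he, hi⟩ ⟨p', hp', q', hq', hpq', he', hj⟩
    apply hij
    apply Fin.ext
    rw [he] at he'
    rcases Sym2.eq_iff.1 he' with ⟨rfl, rfl⟩ | ⟨rfl, rfl⟩
    · exact hi.symm.trans hj
    · rw [add_comm] at hj
      exact hi.symm.trans hj
  · intro i e he
    have hsub : {f | f ∈ {e | ∃ p ∈ P, ∃ q ∈ P, p ≠ q ∧ e = s(p, q) ∧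
        (idx p + idx q) % n / 3 = (i : ℕ)} ∧ Cross e f}.Subsingleton := by
      have hnorm : ∃ a ∈ P, ∃ b ∈ P, idx a < idx b ∧ e = s(a, b) ∧
          (idx a + idx b) % n / 3 = (i : ℕ) := by
        obtain ⟨p, hp, q, hq, hpq, he, hi⟩ := he
        rcases lt_trichotomy (idx p) (idx q) with h | h | h
        · exact ⟨p, hp, q, hq, h, he, hi⟩
        · exact absurd (hinj p hp q hq h) hpq
        · exact ⟨q, hq, p, hp, h, he.trans Sym2.eq_swap, by rw [add_comm]; exact hi⟩
      obtain ⟨a, ha, b, hb, hab, rfl, hi⟩ := hnorm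
      rintro f ⟨⟨c, hc, d, hd, hcd, rfl, hf⟩, hX⟩ g ⟨⟨c', hc', d', hd', hcd', rfl, hg⟩, hX'⟩
      rcases inter_unique (hlt b hb) hab (hlt c hc) (hlt d hd) (hlt c' hc') (hlt d' hd')
        (cross_inter hinj hori ha hb hc hd hab hX) (cross_inter hinj hori ha hb hc' hd' hab hX')
        (hi.trans hf.symm) (hi.trans hg.symm) with ⟨h1, h2⟩ | ⟨h1, h2⟩
      · rw [hinj c hc c' hc' h1, hinj d hd d' hd' h2]
      · rw [hinj c hc d' hd' h1, hinj d hd c' hc' h2]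
        exact Sym2.eq_swap
    rcases hsub.eq_empty_or_singleton with h | ⟨x, h⟩
    · rw [h]; simp
    · rw [h]; simp
end

section
/- Let P be a set of n points in the plane in convex position and let s > 2 be an integer. Then the edge set of the complete geometric graph K(P) can be partitioned into ⌈n/s⌉ classes such that each class, viewed as a geometric graph on P, is ((s−1)(s−2)/2)-plane (each edge crosses at most (s−1)(s−2)/2 other edges of its class). -/
lemma collinear_of_ori {p q r : Pt} (hpq : p ≠ q) (h : ori p q r = 0) :
    Collinear ℝ ({p, q, r} : Set Pt) := by
  rw [collinear_iff_of_mem (p₀ := p) (by simp)]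
  refine ⟨q - p, ?_⟩
  unfold ori at h
  have key : ∃ t : ℝ, r = t • (q - p) +ᵥ p := by
    by_cases h1 : q.1 - p.1 = 0
    · have h2 : q.2 - p.2 ≠ 0 := by
        intro h2
        exact hpq (Prod.ext (by linarith) (by linarith))
      refine ⟨(r.2 - p.2) / (q.2 - p.2), ?_⟩
      have h3 : r.1 - p.1 = 0 := by
        rw [h1] at h
        have : (q.2 - p.2) * (r.1 - p.1) = 0 := by linarith
        exact (mul_eq_zero.mp this).resolve_left h2
      ext
      · simp [h1]; linarith
      · simp; field_simp; ring
    · refine ⟨(r.1 - p.1) / (q.1 - p.1), ?_⟩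
      ext
      · simp; field_simp; ring
      · simp; field_simp; linarith
  intro x hx
  rcases hx with rfl | rfl | rfl
  · exact ⟨0, by simp⟩
  · exact ⟨1, by simp⟩
  · exact key

lemma ori_trans_aux {a b c d e f : ℝ} (hu : 0 < a ∨ (a = 0 ∧ 0 < b))
    (hv : 0 < c ∨ (c = 0 ∧ 0 < d)) (hw : 0 < e ∨ (e = 0 ∧ 0 < f))
    (h1 : 0 < a * d - b * c) (h2 : 0 < c * f - d * e) : 0 < a * f - b * e := by
  have he : 0 ≤ e := by rcases hw with h | ⟨h, -⟩ <;> linarith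
  rcases hv with hc | ⟨rfl, hd⟩
  · rcases hu with ha | ⟨rfl, hb⟩
    · have : 0 < (a * f - b * e) * c := by
        have h3 := mul_nonneg h1.le he
        have h4 := mul_pos h2 ha
        nlinarith
      exact pos_of_mul_pos_left this hc.le
    · nlinarith [mul_pos hb hc]
  · nlinarith [mul_nonneg hd.le he]

lemma ori_hull {o a b c : Pt} (h1 : 0 < ori o a b) (h2 : 0 < ori o b c)
    (h3 : ori a b c ≤ 0) {S : Set Pt} (ho : o ∈ S) (ha : a ∈ S) (hc : c ∈ S) :
    b ∈ convexHull ℝ S := by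
  have hid : ori o a c = ori o a b + ori o b c - ori a b c := by unfold ori; ring
  have hD : 0 < ori o a c := by linarith
  have hconv := convex_convexHull ℝ S
  have := hconv.sum_mem (t := Finset.univ) (w := ![ori o b c / ori o a c, ori o a b / ori o a c,
      (- ori a b c) / ori o a c]) (z := ![a, c, o]) ?_ ?_ ?_
  · convert this using 1
    have hD' := hD.ne'
    ext
    · simp [Fin.sum_univ_three]
      field_simp
      unfold ori; ring
    · simp [Fin.sum_univ_three]
      field_simp
      unfold ori; ring
  · intro i _
    fin_cases i
    · exact div_nonneg h2.le hD.le
    · exact div_nonneg h1.le hD.le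
    · exact div_nonneg (by linarith) hD.le
  · simp [Fin.sum_univ_three]
    field_simp
    linarith
  · intro i _
    fin_cases i
    · exact subset_convexHull ℝ S ha
    · exact subset_convexHull ℝ S hc
    · exact subset_convexHull ℝ S ho

lemma no_cross_same_side {p q r s : Pt} (h : 0 < ori p q r * ori p q s) :
    ¬ (openSegment ℝ p q ∩ openSegment ℝ r s).Nonempty := by
  rintro ⟨z, ⟨a, b, ha, hb, hab, rfl⟩, ⟨c, d, hc, hd, hcd, hz⟩⟩
  have z1 := congrArg Prod.fst hz
  have z2 := congrArg Prod.snd hz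
  simp at z1 z2
  have h0 : c * ori p q r + d * ori p q s = 0 := by
    have e1 : c * ori p q r + d * ori p q s =
      (q.1 - p.1) * ((c * r.2 + d * s.2) - (c + d) * p.2)
        - (q.2 - p.2) * ((c * r.1 + d * s.1) - (c + d) * p.1) := by unfold ori; ring
    rw [e1, z1, z2, hcd]
    have : a = 1 - b := by linarith
    subst this
    ring
  have h5 : ori p q r * (c * ori p q r + d * ori p q s) = 0 := by rw [h0, mul_zero]
  nlinarith [mul_pos hd h, mul_nonneg hc.le (sq_nonneg (ori p q r))]

/-- Convex position yields a cyclic labelling. -/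
lemma exists_label (P : Finset Pt) (hP : ConvexPos P) :
    ∃ L : Pt → ℕ, (∀ p ∈ P, L p < P.card) ∧ (∀ p ∈ P, ∀ q ∈ P, L p = L q → p = q) ∧
      ∀ p ∈ P, ∀ q ∈ P, ∀ r ∈ P, L p < L q → L q < L r → 0 < ori p q r := by
  classical
  rcases P.eq_empty_or_nonempty with rfl | hne
  · exact ⟨fun _ => 0, by simp, by simp, by simp⟩
  obtain ⟨o, hoP, homin⟩ := P.exists_min_image (fun p => toLex p) hne
  have hpos : ∀ q ∈ P, q ≠ o → 0 < q.1 - o.1 ∨ (q.1 - o.1 = 0 ∧ 0 < q.2 - o.2) := by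
    intro q hq hqo
    have h := homin q hq
    rw [Prod.Lex.toLex_le_toLex] at h
    rcases h with h | ⟨h, h'⟩
    · left; linarith
    · right
      refine ⟨by linarith, ?_⟩
      rcases lt_or_eq_of_le h' with h'' | h''
      · linarith
      · exact absurd (Prod.ext h.symm h''.symm) hqo
  let lt : Pt → Pt → Prop := fun r q => q ≠ o ∧ (r = o ∨ 0 < ori o r q)
  have oo : ∀ q, ori o o q = 0 := fun q => by unfold ori; ring
  have oqq : ∀ q, ori o q q = 0 := fun q => by unfold ori; ring
  have oqo : ∀ q, ori o q o = 0 := fun q => by unfold ori; ring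
  have osw : ∀ q r, ori o q r = - ori o r q := fun q r => by unfold ori; ring
  have irr : ∀ q, ¬ lt q q := by
    rintro q ⟨h1, h2 | h2⟩
    · exact h1 h2
    · rw [oqq] at h2; exact lt_irrefl _ h2
  have tr : ∀ p ∈ P, ∀ q ∈ P, ∀ r ∈ P, lt p q → lt q r → lt p r := by
    rintro p hp q hq r hr ⟨h1, h2⟩ ⟨h3, h4⟩
    refine ⟨h3, ?_⟩
    have h4 := h4.resolve_left h1
    by_cases hpo : p = o
    · exact Or.inl hpo
    · have h2 := h2.resolve_left hpo
      right
      exact ori_trans_aux (hpos p hp hpo) (hpos q hq h1) (hpos r hr h3) h2 h4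
  have tri : ∀ p ∈ P, ∀ q ∈ P, p ≠ q → lt p q ∨ lt q p := by
    intro p hp q hq hpq
    by_cases hpo : p = o
    · left; exact ⟨fun h => hpq (hpo.trans h.symm), Or.inl hpo⟩
    by_cases hqo : q = o
    · right; exact ⟨hpo, Or.inl hqo⟩
    have hc : ori o p q ≠ 0 := fun h =>
      hP.1 o hoP p hp q hq (Ne.symm hpo) (Ne.symm hqo) hpq (collinear_of_ori (Ne.symm hpo) h)
    rcases lt_or_gt_of_ne hc with h | h
    · right; exact ⟨hpo, Or.inr (by rw [osw]; linarith)⟩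
    · left; exact ⟨hqo, Or.inr h⟩
  let L : Pt → ℕ := fun q => (P.filter (fun r => lt r q)).card
  have mono : ∀ p ∈ P, ∀ q ∈ P, lt p q → L p < L q := by
    intro p hp q hq h
    apply Finset.card_lt_card
    rw [Finset.ssubset_iff_of_subset]
    · exact ⟨p, by simp [hp, h], by simp [irr]⟩
    · intro r hr
      rw [Finset.mem_filter] at hr ⊢
      exact ⟨hr.1, tr r hr.1 p hp q hq hr.2 h⟩
  have refl' : ∀ p ∈ P, ∀ q ∈ P, L p < L q → lt p q := by
    intro p hp q hq h
    have hne : p ≠ q := by rintro rfl; exact lt_irrefl _ h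
    rcases tri p hp q hq hne with h' | h'
    · exact h'
    · exact absurd (mono q hq p hp h') (by omega)
  refine ⟨L, ?_, ?_, ?_⟩
  · intro p hp
    apply Finset.card_lt_card
    rw [Finset.ssubset_iff_of_subset (Finset.filter_subset _ _)]
    exact ⟨p, hp, by simp [irr]⟩
  · intro p hp q hq h
    by_contra hne
    rcases tri p hp q hq hne with h' | h'
    · have := mono p hp q hq h'; omega
    · have := mono q hq p hp h'; omega
  · intro p hp q hq r hr hpq hqr
    have h1 := refl' p hp q hq hpq
    have h2 := refl' q hq r hr hqr
    have h2' : 0 < ori o q r := h2.2.resolve_left h1.1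
    rcases h1.2 with rfl | h1'
    · exact h2'
    by_contra hcon
    have hpne : p ≠ q := by rintro rfl; exact lt_irrefl _ hpq
    have hrne : r ≠ q := by rintro rfl; exact lt_irrefl _ hqr
    refine hP.2 q hq (ori_hull h1' h2' (not_lt.mp hcon) ?_ ?_ ?_)
    · simp [hoP, Ne.symm h1.1]
    · simp [hp, hpne]
    · simp [hr, hrne]

lemma ori_rot (p q r : Pt) : ori p q r = ori r p q := by unfold ori; ring
lemma ori_swap (p q r : Pt) : ori p q r = - ori p r q := by unfold ori; ring

/-- Edges that cross interleave in the labelling. -/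
lemma interleave {P : Finset Pt} {L : Pt → ℕ}
    (hinj : ∀ p ∈ P, ∀ q ∈ P, L p = L q → p = q)
    (hL : ∀ p ∈ P, ∀ q ∈ P, ∀ r ∈ P, L p < L q → L q < L r → 0 < ori p q r)
    {p q : Pt} (hp : p ∈ P) (hq : q ∈ P) (hlt : L p < L q) {f : Sym2 Pt}
    (hf : f ∈ KEdges P) (hc : Cross s(p, q) f) :
    ∃ x ∈ P, ∃ y ∈ P, f = s(x, y) ∧ L p < L x ∧ L x < L q ∧ (L y < L p ∨ L q < L y) := by
  obtain ⟨x, hx, y, hy, hxy, rfl⟩ := hf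
  obtain ⟨hdis, p', q', r', s', he, hf', hne⟩ := hc
  have hne2 : (openSegment ℝ p q ∩ openSegment ℝ x y).Nonempty := by
    have e1 : openSegment ℝ p' q' = openSegment ℝ p q := by
      rcases Sym2.eq_iff.mp he with ⟨rfl, rfl⟩ | ⟨rfl, rfl⟩
      · rfl
      · exact openSegment_symm _ _ _
    have e2 : openSegment ℝ r' s' = openSegment ℝ x y := by
      rcases Sym2.eq_iff.mp hf' with ⟨rfl, rfl⟩ | ⟨rfl, rfl⟩
      · rfl
      · exact openSegment_symm _ _ _
    rwa [e1, e2] at hne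
  have d1 := hdis p (by simp)
  have d2 := hdis q (by simp)
  simp only [Sym2.mem_iff, not_or] at d1 d2
  have inside : ∀ z ∈ P, L p < L z → L z < L q → ori p q z < 0 := by
    intro z hz h1 h2
    have := hL p hp z hz q hq h1 h2
    rw [ori_swap]; linarith
  have outside : ∀ z ∈ P, (L z < L p ∨ L q < L z) → 0 < ori p q z := by
    rintro z hz (h | h)
    · rw [ori_rot]; exact hL z hz p hp q hq h hlt
    · exact hL p hp q hq z hz hlt h
  have neq : ∀ u ∈ P, ∀ v ∈ P, u ≠ v → L u ≠ L v := fun u hu v hv h h' => h (hinj u hu v hv h')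
  have n1 := neq p hp x hx d1.1
  have n2 := neq p hp y hy d1.2
  have n3 := neq q hq x hx d2.1
  have n4 := neq q hq y hy d2.2
  by_cases ix : L p < L x ∧ L x < L q
  · by_cases iy : L p < L y ∧ L y < L q
    · exact absurd hne2 (no_cross_same_side
        (mul_pos_of_neg_of_neg (inside x hx ix.1 ix.2) (inside y hy iy.1 iy.2)))
    · exact ⟨x, hx, y, hy, rfl, ix.1, ix.2, by omega⟩
  · by_cases iy : L p < L y ∧ L y < L q
    · exact ⟨y, hy, x, hx, Sym2.eq_swap, iy.1, iy.2, by omega⟩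
    · exact absurd hne2 (no_cross_same_side
        (mul_pos (outside x hx (by omega)) (outside y hy (by omega))))

/-- Counting relation between a crossing edge with labels `X, Y` and a pair `(u, v)`. -/
def CRel (n s t a b X Y u v : ℕ) : Prop :=
  1 ≤ u ∧ 1 ≤ v ∧ u + v + 1 ≤ s ∧
  ((u + t + 1 ≤ s ∧ X = a + u ∧ (Y = b + v ∨ Y + n = b + v)) ∨
   (s < u + t + 1 ∧ u + t + 1 + X = s + b ∧ (Y + v = a ∨ Y + v = a + n)))

lemma mod_cases_s2 {n m : ℕ} (h : m < 2 * n) :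
    (m < n ∧ m % n = m) ∨ (n ≤ m ∧ m % n + n = m) := by
  rcases lt_or_ge m n with h1 | h1
  · exact Or.inl ⟨h1, Nat.mod_eq_of_lt h1⟩
  · right
    refine ⟨h1, ?_⟩
    rw [Nat.mod_eq_sub_mod h1, Nat.mod_eq_of_lt (by omega)]
    omega

lemma crel_exists {n s a b X Y : ℕ} (hs : 2 < s) (hb : b < n) (hY : Y < n)
    (h1 : a < X) (h2 : X < b) (h3 : Y < a ∨ b < Y)
    (hcl : (X + Y) % n / s = (a + b) % n / s) :
    ∃ u v, CRel n s ((a + b) % n % s) a b X Y u v := by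
  have m1 := mod_cases_s2 (n := n) (m := a + b) (by omega)
  have m2 := mod_cases_s2 (n := n) (m := X + Y) (by omega)
  have q1 := Nat.div_add_mod ((a + b) % n) s
  have q2 := Nat.div_add_mod ((X + Y) % n) s
  have l1 := Nat.mod_lt ((a + b) % n) (show s > 0 by omega)
  have l2 := Nat.mod_lt ((X + Y) % n) (show s > 0 by omega)
  rw [hcl] at q2
  generalize (a + b) % n % s = t at *
  generalize (X + Y) % n % s = t' at *
  generalize s * ((a + b) % n / s) = k at *
  generalize (a + b) % n = r at *
  generalize (X + Y) % n = r' at *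
  unfold CRel
  by_cases htt : t < t'
  · refine ⟨X - a, if b < Y then Y - b else Y + n - b, ?_⟩
    split_ifs <;> omega
  · refine ⟨s - 1 - t + (b - X), if b < Y then n - Y + a else a - Y, ?_⟩
    split_ifs <;> omega

lemma crel_inj {n s t a b X Y X' Y' u v : ℕ} (hY : Y < n) (hY' : Y' < n)
    (h : CRel n s t a b X Y u v) (h' : CRel n s t a b X' Y' u v) : X = X' ∧ Y = Y' := by
  unfold CRel at h h'
  omega

lemma kplane_aux {P : Finset Pt} {L : Pt → ℕ} {s k : ℕ} (hs : 2 < s)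
    (hlt : ∀ p ∈ P, L p < P.card)
    (hinj : ∀ p ∈ P, ∀ q ∈ P, L p = L q → p = q)
    (hL : ∀ p ∈ P, ∀ q ∈ P, ∀ r ∈ P, L p < L q → L q < L r → 0 < ori p q r)
    (E : Set (Sym2 Pt)) (hE : E ⊆ KEdges P)
    (hEk : ∀ p q, s(p, q) ∈ E → (L p + L q) % P.card / s = k) :
    KPlane ((s - 1) * (s - 2) / 2) E := by
  intro e he
  obtain ⟨p, hp, q, hq, hpq, hpqlt, rfl⟩ :
      ∃ p ∈ P, ∃ q ∈ P, p ≠ q ∧ L p < L q ∧ e = s(p, q) := by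
    obtain ⟨p, hp, q, hq, hpq, rfl⟩ := hE he
    rcases lt_trichotomy (L p) (L q) with h | h | h
    · exact ⟨p, hp, q, hq, hpq, h, rfl⟩
    · exact absurd (hinj p hp q hq h) hpq
    · exact ⟨q, hq, p, hp, hpq.symm, h, Sym2.eq_swap⟩
  have hk := hEk p q he
  let T : Finset (Σ _ : ℕ, ℕ) := (Finset.range (s - 1)).sigma (fun k => Finset.range k)
  have hT : T.card = (s - 1) * (s - 2) / 2 := by
    simp only [T, Finset.card_sigma, Finset.card_range]
    rw [Finset.sum_range_id]
    rfl
  have key : ∀ f, f ∈ {f | f ∈ E ∧ Cross s(p, q) f} → ∃ z : Σ _ : ℕ, ℕ, z ∈ T ∧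
      ∃ x ∈ P, ∃ y ∈ P, f = s(x, y) ∧
        CRel P.card s ((L p + L q) % P.card % s) (L p) (L q) (L x) (L y)
          (z.2 + 1) (z.1 - z.2) := by
    rintro f ⟨hfE, hfc⟩
    obtain ⟨x, hx, y, hy, rfl, h1, h2, h3⟩ := interleave hinj hL hp hq hpqlt (hE hfE) hfc
    have hk' := hEk x y hfE
    obtain ⟨u, v, huv⟩ := crel_exists hs (hlt q hq) (hlt y hy) h1 h2 h3 (hk'.trans hk.symm)
    have huv' := huv
    obtain ⟨hu, hv, hsum, -⟩ := huv
    refine ⟨⟨u + v - 1, u - 1⟩, ?_, x, hx, y, hy, rfl, ?_⟩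
    · simp only [T, Finset.mem_sigma, Finset.mem_range]
      omega
    · have e1 : u - 1 + 1 = u := by omega
      have e2 : u + v - 1 - (u - 1) = v := by omega
      simp only [e1, e2]
      exact huv'
  choose! g hgT hg using key
  rw [← hT, ← Set.ncard_coe_finset]
  refine Set.ncard_le_ncard_of_injOn g (fun f hf => hgT f hf) ?_ (Finset.finite_toSet _)
  intro f hf f' hf' hff
  obtain ⟨x, hx, y, hy, rfl, h⟩ := hg f hf
  obtain ⟨x', hx', y', hy', rfl, h'⟩ := hg f' hf'
  rw [hff] at h
  obtain ⟨hX, hY⟩ := crel_inj (hlt y hy) (hlt y' hy') h h'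
  rw [hinj x hx x' hx' hX, hinj y hy y' hy' hY]

/-- For `n` points in convex position and an integer `s > 2`, `K(P)` can be
partitioned into `⌈n/s⌉` classes each of which is `((s-1)(s-2)/2)`-plane. -/
theorem stmt_2 (n : ℕ) (P : Finset Pt) (hP : ConvexPos P) (hcard : P.card = n)
    (s : ℕ) (hs : 2 < s) :
    ∃ F : Fin (⌈(n : ℝ) / (s : ℝ)⌉₊) → Set (Sym2 Pt),
      (⋃ i, F i) = KEdges P ∧
      (Pairwise fun i j => Disjoint (F i) (F j)) ∧
      (∀ i, KPlane ((s - 1) * (s - 2) / 2) (F i)) := by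
  subst hcard
  obtain ⟨L, hlt, hinj, hL⟩ := exists_label P hP
  let c : Sym2 Pt → ℕ := Sym2.lift ⟨fun p q => (L p + L q) % P.card / s,
    fun p q => by simp only [add_comm]⟩
  refine ⟨fun i => {e | e ∈ KEdges P ∧ c e = i}, ?_, ?_, ?_⟩
  · ext e
    simp only [Set.mem_iUnion, Set.mem_ofPred_eq]
    constructor
    · rintro ⟨i, h, -⟩
      exact h
    · intro h
      refine ⟨⟨c e, ?_⟩, h, rfl⟩
      obtain ⟨p, hp, q, hq, hpq, rfl⟩ := h
      rw [Nat.lt_ceil]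
      have hn : 0 < P.card := Finset.card_pos.mpr ⟨p, hp⟩
      have h1 : c s(p, q) * s < P.card :=
        lt_of_le_of_lt (Nat.div_mul_le_self _ _) (Nat.mod_lt (L p + L q) hn)
      rw [lt_div_iff₀ (by exact_mod_cast (by omega : 0 < s))]
      exact_mod_cast h1
  · intro i j hij
    rw [Set.disjoint_left]
    rintro e ⟨-, h1⟩ ⟨-, h2⟩
    exact hij (Fin.ext (h1.symm.trans h2))
  · intro i
    exact kplane_aux (k := i) hs hlt hinj hL _ (fun e he => he.1) (fun p q h => h.2)
end

section
/- Let k ∈ {0,1,2,3,4} and let G be a geometric graph on a set of n ≥ 2 points in convex position such that every edge of G crosses at most k other edges of G. Then the number of edges of G is at most ((k+4)/2)·n − (k+3). -/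
/-- orientation determinant -/
def dt (p q r : Pt) : ℝ := (q.1 - p.1) * (r.2 - p.2) - (q.2 - p.2) * (r.1 - p.1)

theorem dt_ne_zero {P : Finset Pt} (hP : GenPos P) {p q r : Pt} (hp : p ∈ P) (hq : q ∈ P)
    (hr : r ∈ P) (h1 : p ≠ q) (h2 : p ≠ r) (h3 : q ≠ r) : dt p q r ≠ 0 := by
  intro h
  apply hP p hp q hq r hr h1 h2 h3
  rw [collinear_iff_of_mem (p₀ := p) (by simp)]
  refine ⟨q - p, ?_⟩
  unfold dt at h
  intro x hx
  simp only [Set.mem_insert_iff, Set.mem_singleton_iff] at hx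
  rcases hx with rfl | rfl | rfl
  · exact ⟨0, by simp⟩
  · exact ⟨1, by simp⟩
  · by_cases hx1 : q.1 - p.1 = 0
    · have hx2 : q.2 - p.2 ≠ 0 := by
        intro h'
        exact h1 (Prod.ext (by linarith) (by linarith))
      refine ⟨(x.2 - p.2) / (q.2 - p.2), ?_⟩
      have e : x.1 - p.1 = 0 := by
        rw [hx1] at h
        have : (q.2 - p.2) * (x.1 - p.1) = 0 := by linarith
        exact (mul_eq_zero.mp this).resolve_left hx2
      ext
      · simp [hx1]; linarith
      · simp; field_simp; ring
    · refine ⟨(x.1 - p.1) / (q.1 - p.1), ?_⟩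
      ext
      · simp; field_simp; ring
      · simp; field_simp; linarith

/-- the triangle obstruction -/
theorem dt_triangle {P : Finset Pt} (hP : ConvexPos P) {o p q r : Pt} (ho : o ∈ P) (hp : p ∈ P)
    (hq : q ∈ P) (hr : r ∈ P) (hoq : o ≠ q) (hpq : p ≠ q) (hqr : q ≠ r) (hpr : p ≠ r)
    (h1 : 0 < dt o p q) (h2 : 0 < dt o q r) : 0 < dt p q r := by
  by_contra hneg
  have hlt : dt p q r < 0 := lt_of_le_of_ne (not_lt.mp hneg) (dt_ne_zero hP.1 hp hq hr hpq hpr hqr)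
  apply hP.2 q hq
  have hsum : dt o p q + dt o q r - dt p q r = dt o p r := by unfold dt; ring
  have hpos : 0 < dt o p r := by linarith
  have mo : o ∈ convexHull ℝ ((P.erase q : Finset Pt) : Set Pt) :=
    subset_convexHull _ _ (by simp [ho, hoq])
  have mp : p ∈ convexHull ℝ ((P.erase q : Finset Pt) : Set Pt) :=
    subset_convexHull _ _ (by simp [hp, hpq])
  have mr : r ∈ convexHull ℝ ((P.erase q : Finset Pt) : Set Pt) :=
    subset_convexHull _ _ (by simp [hr, hqr.symm])
  have hc := convex_convexHull ℝ ((P.erase q : Finset Pt) : Set Pt)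
  have key := hc.sum_mem (t := Finset.univ) (w := ![- dt p q r / dt o p r, dt o q r / dt o p r, dt o p q / dt o p r])
    (z := ![o, p, r]) ?_ ?_ ?_
  · convert key using 1
    simp only [Fin.sum_univ_three, Matrix.cons_val_zero, Matrix.cons_val_one, Matrix.cons_val]
    ext
    · simp; field_simp; unfold dt; ring
    · simp; field_simp; unfold dt; ring
  · intro i _
    fin_cases i
    · simp; exact div_nonneg (by linarith) hpos.le
    · simp; exact div_nonneg (by linarith) hpos.le
    · simp; exact div_nonneg (by linarith) hpos.le
  · simp only [Fin.sum_univ_three, Matrix.cons_val_zero, Matrix.cons_val_one, Matrix.cons_val]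
    field_simp
    linarith
  · intro i _
    fin_cases i
    · simpa using mo
    · simpa using mp
    · simpa using mr

/-- four points in counterclockwise order: the diagonals cross -/
theorem seg_cross {p q r s : Pt} (h1 : 0 < dt p q r) (h2 : 0 < dt p r s)
    (h3 : 0 < dt p q s) (h4 : 0 < dt q r s) :
    (openSegment ℝ p r ∩ openSegment ℝ q s).Nonempty := by
  have hD : dt p q r + dt p r s = dt p q s + dt q r s := by unfold dt; ring
  have hD0 : 0 < dt p q r + dt p r s := by linarith
  have hD1 : 0 < dt p q s + dt q r s := by linarith
  refine ⟨(dt q r s / (dt p q s + dt q r s)) • p + (dt p q s / (dt p q s + dt q r s)) • r,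
    ⟨_, _, by positivity, by positivity, by field_simp; ring, rfl⟩,
    ⟨dt p r s / (dt p q r + dt p r s), dt p q r / (dt p q r + dt p r s),
     by positivity, by positivity, by field_simp; ring, ?_⟩⟩
  rw [hD]
  ext
  · simp; field_simp; unfold dt; ring
  · simp; field_simp; unfold dt; ring

/-- lexicographically positive vector -/
def lexPos (p q : Pt) : Prop := p.1 < q.1 ∨ (p.1 = q.1 ∧ p.2 < q.2)

theorem dt_trans {o p q r : Pt} (hp : lexPos o p) (hq : lexPos o q) (hr : lexPos o r)
    (h1 : 0 < dt o p q) (h2 : 0 < dt o q r) : 0 < dt o p r := by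
  unfold lexPos at *
  have id1 : (q.1 - o.1) * dt o p r = (r.1 - o.1) * dt o p q + (p.1 - o.1) * dt o q r := by
    unfold dt; ring
  have hp0 : 0 ≤ p.1 - o.1 := by rcases hp with h | ⟨h, _⟩ <;> linarith
  have hr0 : 0 ≤ r.1 - o.1 := by rcases hr with h | ⟨h, _⟩ <;> linarith
  rcases hq with h | ⟨h, h'⟩
  · have hq' : 0 < q.1 - o.1 := by linarith
    have : 0 < (r.1 - o.1) * dt o p q + (p.1 - o.1) * dt o q r := by
      rcases hp0.eq_or_lt with e | e
      · rcases hr0.eq_or_lt with e' | e'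
        · exfalso
          unfold dt at h1
          rw [← e] at h1
          have : o.2 < p.2 := by rcases hp with g | ⟨_, g⟩ <;> linarith
          nlinarith
        · have := mul_pos e' h1
          have := mul_nonneg hp0 h2.le
          linarith
      · have := mul_pos e h2
        have := mul_nonneg hr0 h1.le
        linarith
    rw [← id1] at this
    exact (mul_pos_iff_of_pos_left hq').mp this
  · exfalso
    unfold dt at h2
    have : q.1 - o.1 = 0 := by linarith
    rw [this] at h2
    nlinarith

/-- the points of `P`, as a type without any predefined order -/
structure PtIn (P : Finset Pt) where
  /-- the point -/
  val : Pt
  /-- membership -/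
  mem : val ∈ P

theorem PtIn.ext' {P : Finset Pt} {a b : PtIn P} (h : a.val = b.val) : a = b := by
  cases a; cases b; cases h; rfl

/-- the tautological equivalence -/
def PtIn.equiv (P : Finset Pt) : {x // x ∈ P} ≃ PtIn P where
  toFun x := ⟨x.1, x.2⟩
  invFun x := ⟨x.1, x.2⟩
  left_inv _ := rfl
  right_inv _ := rfl

theorem exists_order (P : Finset Pt) (hP : ConvexPos P) (hne : P.Nonempty) :
    ∃ v : ℕ → Pt, (∀ i < P.card, v i ∈ P) ∧ (∀ p ∈ P, ∃ i < P.card, v i = p) ∧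
      (∀ i < P.card, ∀ j < P.card, v i = v j → i = j) ∧
      ∀ i j k l, i < j → j < k → k < l → l < P.card →
        (openSegment ℝ (v i) (v k) ∩ openSegment ℝ (v j) (v l)).Nonempty := by
  classical
  obtain ⟨o, ho, hmin⟩ := Finset.exists_min_image P (fun p : Pt => toLex p) hne
  have hlex : ∀ p ∈ P, p ≠ o → lexPos o p := by
    intro p hp hpo
    have h := lt_of_le_of_ne (hmin p hp) (fun h => hpo (toLex.injective h).symm)
    rw [Prod.Lex.toLex_lt_toLex] at h
    exact h
  let le : PtIn P → PtIn P → Prop := fun a b =>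
    a = b ∨ (a.1 = o) ∨ (b.1 ≠ o ∧ a.1 ≠ o ∧ 0 < dt o a.1 b.1)
  have dt_swap : ∀ a b c : Pt, dt a b c = - dt a c b := by intros; unfold dt; ring
  let L : LinearOrder (PtIn P) :=
    { le := le
      le_refl := fun a => Or.inl rfl
      le_trans := by
        rintro a b c (rfl | h1 | ⟨h1, h1', h1''⟩) h2
        · exact h2
        · exact Or.inr (Or.inl h1)
        · rcases h2 with rfl | h2 | ⟨h2, h2', h2''⟩
          · exact Or.inr (Or.inr ⟨h1, h1', h1''⟩)
          · exact absurd h2 h1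
          · exact Or.inr (Or.inr ⟨h2, h1', dt_trans (hlex _ a.2 h1') (hlex _ b.2 h1)
              (hlex _ c.2 h2) h1'' h2''⟩)
      le_antisymm := by
        rintro a b (rfl | h1 | ⟨h1, h1', h1''⟩) h2
        · rfl
        · rcases h2 with rfl | h2 | ⟨h2, h2', h2''⟩
          · rfl
          · exact PtIn.ext' (h1.trans h2.symm)
          · exact absurd h1 h2
        · rcases h2 with rfl | h2 | ⟨h2, h2', h2''⟩
          · rfl
          · exact absurd h2 h1
          · rw [dt_swap] at h2''; linarith
      le_total := by
        intro a b
        by_cases hab : a = b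
        · exact Or.inl (Or.inl hab)
        by_cases ha : a.1 = o
        · exact Or.inl (Or.inr (Or.inl ha))
        by_cases hb : b.1 = o
        · exact Or.inr (Or.inr (Or.inl hb))
        have hab' : a.1 ≠ b.1 := fun h => hab (PtIn.ext' h)
        have := dt_ne_zero hP.1 ho a.2 b.2 (Ne.symm ha) (Ne.symm hb) hab'
        rcases lt_or_gt_of_ne this with h | h
        · right; right; right
          refine ⟨ha, hb, ?_⟩
          rw [dt_swap]; linarith
        · left; right; right
          exact ⟨hb, ha, h⟩
      toDecidableLE := fun a b => Classical.dec _ }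
  let : Fintype (PtIn P) := Fintype.ofEquiv _ (PtIn.equiv P)
  have hc : Fintype.card (PtIn P) = P.card := by
    rw [← Fintype.card_congr (PtIn.equiv P)]; simp
  let f := monoEquivOfFin (PtIn P) hc
  have hf : ∀ i j : Fin P.card, i < j → (f i).1 ≠ (f j).1 ∧
      ((f i).1 = o ∨ ((f j).1 ≠ o ∧ (f i).1 ≠ o ∧ 0 < dt o (f i).1 (f j).1)) := by
    intro i j hij
    have hne' : f i ≠ f j := fun h => hij.ne (f.injective h)
    have hle : le (f i) (f j) := (f.map_rel_iff).mpr hij.le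
    exact ⟨fun h => hne' (PtIn.ext' h), hle.resolve_left hne'⟩
  have tri : ∀ i j k : Fin P.card, i < j → j < k → 0 < dt (f i).1 (f j).1 (f k).1 := by
    intro i j k hij hjk
    obtain ⟨n1, a1⟩ := hf i j hij
    obtain ⟨n2, a2⟩ := hf j k hjk
    obtain ⟨n3, a3⟩ := hf i k (hij.trans hjk)
    rcases a1 with a1 | ⟨b1, b2, b3⟩
    · rcases a2 with a2 | a2
      · exact absurd (a1.trans a2.symm) n1
      · rw [a1]; exact a2.2.2
    · rcases a2 with a2 | a2
      · exact absurd a2 b1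
      · exact dt_triangle hP ho (f i).2 (f j).2 (f k).2 (Ne.symm b1) n1 n2 n3 b3 a2.2.2
  refine ⟨fun i => if h : i < P.card then (f ⟨i, h⟩).1 else o, ?_, ?_, ?_, ?_⟩
  · intro i hi
    simp only [hi, dif_pos]
    exact (f _).2
  · intro p hp
    obtain ⟨i, hi⟩ := f.surjective ⟨p, hp⟩
    refine ⟨i.1, i.2, ?_⟩
    simp [hi]
  · intro i hi j hj h
    simp only [hi, hj, dif_pos] at h
    have := f.injective (PtIn.ext' h)
    simpa using this
  · intro i j k l h1 h2 h3 h4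
    have hk := h3.trans h4
    have hj := h2.trans hk
    have hi := h1.trans hj
    simp only [hi, hj, hk, h4, dif_pos]
    exact seg_cross (tri _ _ _ h1 h2) (tri _ _ _ (h1.trans h2) h3) (tri _ _ _ h1 (h2.trans h3))
      (tri _ _ _ h2 h3)

/-- number of edges of `S` crossing the chord `(a,b)` -/
def cX (S : Finset (ℕ × ℕ)) (a b : ℕ) : ℕ :=
  ∑ e ∈ S, if (a < e.1 ∧ e.1 < b ∧ b < e.2) ∨ (e.1 < a ∧ a < e.2 ∧ e.2 < b) then 1 else 0

/-- number of edges of `S` inside `[a,b]`, except `(a,b)` itself -/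
def cI (S : Finset (ℕ × ℕ)) (a b : ℕ) : ℕ :=
  ∑ e ∈ S, if a ≤ e.1 ∧ e.2 ≤ b ∧ ¬ (e.1 = a ∧ e.2 = b) then 1 else 0

/-- indicator of `(a,b) ∈ S` -/
def cR (S : Finset (ℕ × ℕ)) (a b : ℕ) : ℕ :=
  ∑ e ∈ S, if e.1 = a ∧ e.2 = b then 1 else 0

/-- edges from `a` to the open interval `(w,b)` -/
def cA (S : Finset (ℕ × ℕ)) (a w b : ℕ) : ℕ :=
  ∑ e ∈ S, if e.1 = a ∧ w < e.2 ∧ e.2 < b then 1 else 0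

/-- edges from `b` to the open interval `(a,w)` -/
def cB (S : Finset (ℕ × ℕ)) (a w b : ℕ) : ℕ :=
  ∑ e ∈ S, if e.2 = b ∧ a < e.1 ∧ e.1 < w then 1 else 0

/-- edges from `w` to the outside of `[a,b]` -/
def cW (S : Finset (ℕ × ℕ)) (a w b : ℕ) : ℕ :=
  ∑ e ∈ S, if (e.1 = w ∧ b < e.2) ∨ (e.2 = w ∧ e.1 < a) then 1 else 0


theorem cR_mem {S : Finset (ℕ × ℕ)} {a b : ℕ} (h : (a, b) ∈ S) : cR S a b = 1 := by
  unfold cR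
  rw [Finset.sum_eq_single (a, b)]
  · simp
  · rintro ⟨i, j⟩ _ hne
    simp only [ite_eq_right_iff]
    rintro ⟨rfl, rfl⟩
    exact absurd rfl hne
  · exact fun h' => absurd h h'

theorem cR_not_mem {S : Finset (ℕ × ℕ)} {a b : ℕ} (h : (a, b) ∉ S) : cR S a b = 0 := by
  unfold cR
  apply Finset.sum_eq_zero
  rintro ⟨i, j⟩ he
  simp only [ite_eq_right_iff]
  rintro ⟨rfl, rfl⟩
  exact absurd he h

set_option maxHeartbeats 1000000 in
theorem tri_id {S : Finset (ℕ × ℕ)} (hS : ∀ e ∈ S, e.1 < e.2) {a w b : ℕ} (h1 : a < w) (h2 : w < b) :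
    2 * cI S a b + cX S a b = (2 * cI S a w + cX S a w) + (2 * cI S w b + cX S w b)
      + 2 * cR S a w + 2 * cR S w b + cA S a w b + cB S a w b + cW S a w b := by
  unfold cI cX cR cA cB cW
  simp only [Finset.mul_sum, ← Finset.sum_add_distrib]
  refine Finset.sum_congr rfl ?_
  rintro ⟨i, j⟩ he
  have := hS _ he
  simp only at this ⊢
  repeat' first | omega | split

theorem base_id {S : Finset (ℕ × ℕ)} (hS : ∀ e ∈ S, e.1 < e.2) (a : ℕ) : 2 * cI S a (a+1) + cX S a (a+1) = 0 := by
  unfold cI cX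
  simp only [Finset.mul_sum, ← Finset.sum_add_distrib]
  apply Finset.sum_eq_zero
  rintro ⟨i, j⟩ he
  have := hS _ he
  simp only at this ⊢
  repeat' first | omega | split

theorem ineq1 {S : Finset (ℕ × ℕ)} (hS : ∀ e ∈ S, e.1 < e.2) {a w b : ℕ} (h1 : a < w) (h2 : w < b) :
    cX S w b + cB S a w b + cW S a w b ≤ cX S a w + cX S a b + cA S a w b := by
  unfold cX cA cB cW
  simp only [← Finset.sum_add_distrib]
  refine Finset.sum_le_sum ?_
  rintro ⟨i, j⟩ he
  have := hS _ he
  simp only at this ⊢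
  repeat' first | omega | split

theorem ineq1' {S : Finset (ℕ × ℕ)} (hS : ∀ e ∈ S, e.1 < e.2) {a w b : ℕ} (h1 : a < w) (h2 : w < b) :
    cX S a w + cA S a w b + cW S a w b ≤ cX S w b + cX S a b + cB S a w b := by
  unfold cX cA cB cW
  simp only [← Finset.sum_add_distrib]
  refine Finset.sum_le_sum ?_
  rintro ⟨i, j⟩ he
  have := hS _ he
  simp only at this ⊢
  repeat' first | omega | split

theorem ineq2 {S : Finset (ℕ × ℕ)} (hS : ∀ e ∈ S, e.1 < e.2) {a v w b : ℕ} (h1 : a < v) (h2 : v < w) (h3 : w < b) :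
    cA S a v b + cW S a w b ≤ cX S v b := by
  unfold cX cA cW
  simp only [← Finset.sum_add_distrib]
  refine Finset.sum_le_sum ?_
  rintro ⟨i, j⟩ he
  have := hS _ he
  simp only at this ⊢
  repeat' first | omega | split

theorem ineq2' {S : Finset (ℕ × ℕ)} (hS : ∀ e ∈ S, e.1 < e.2) {a v w b : ℕ} (h1 : a < v) (h2 : v < w) (h3 : w < b) :
    cB S a w b + cW S a v b ≤ cX S a w := by
  unfold cX cB cW
  simp only [← Finset.sum_add_distrib]
  refine Finset.sum_le_sum ?_
  rintro ⟨i, j⟩ he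
  have := hS _ he
  simp only at this ⊢
  repeat' first | omega | split

theorem ineqW {S : Finset (ℕ × ℕ)} (hS : ∀ e ∈ S, e.1 < e.2) {a w b : ℕ} (h1 : a < w) (h2 : w < b) :
    cW S a w b ≤ cX S a b := by
  unfold cX cW
  refine Finset.sum_le_sum ?_
  rintro ⟨i, j⟩ he
  have := hS _ he
  simp only at this ⊢
  repeat' first | omega | split

-- quadrilateral inequalities, `a < w < v < b`
set_option maxHeartbeats 1000000 in
theorem quad1 {S : Finset (ℕ × ℕ)} (hS : ∀ e ∈ S, e.1 < e.2) {a w v b : ℕ} (h1 : a < w) (h2 : w < v) (h3 : v < b) :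
    cA S w v b + cW S a w b + cW S w v b + cX S w v ≤
      cX S a b + cX S a w + cX S v b + cA S a w b + cB S a v b := by
  unfold cX cA cB cW
  simp only [← Finset.sum_add_distrib]
  refine Finset.sum_le_sum ?_
  rintro ⟨i, j⟩ he
  have := hS _ he
  simp only at this ⊢
  repeat' first | omega | split

theorem quad2 {S : Finset (ℕ × ℕ)} (hS : ∀ e ∈ S, e.1 < e.2) {a w v b : ℕ} (h1 : a < w) (h2 : w < v) (h3 : v < b) :
    cW S a w b + cW S w v b ≤ cX S a b + cX S a w + cA S a w b := by
  unfold cX cA cW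
  simp only [← Finset.sum_add_distrib]
  refine Finset.sum_le_sum ?_
  rintro ⟨i, j⟩ he
  have := hS _ he
  simp only at this ⊢
  repeat' first | omega | split

theorem quad3 {S : Finset (ℕ × ℕ)} (hS : ∀ e ∈ S, e.1 < e.2) {a w v b : ℕ} (h1 : a < w) (h2 : w < v) (h3 : v < b) :
    cA S w v b + cW S a w b + cW S w v b ≤ cX S a b + cX S v b + cA S a w b + cB S a w v := by
  unfold cX cA cB cW
  simp only [← Finset.sum_add_distrib]
  refine Finset.sum_le_sum ?_
  rintro ⟨i, j⟩ he
  have := hS _ he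
  simp only at this ⊢
  repeat' first | omega | split

theorem quad4 {S : Finset (ℕ × ℕ)} (hS : ∀ e ∈ S, e.1 < e.2) {w v b j : ℕ} (h2 : w < v) (h3 : v < j) (h4 : j < b) :
    cW S w v b ≤ cX S w j := by
  unfold cX cW
  refine Finset.sum_le_sum ?_
  rintro ⟨i, j⟩ he
  have := hS _ he
  simp only at this ⊢
  repeat' first | omega | split

theorem quad5 {S : Finset (ℕ × ℕ)} (hS : ∀ e ∈ S, e.1 < e.2) {a i w v b : ℕ} (h1 : a < i) (h2 : i < w) (h3 : w < v) (h4 : v < b) :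
    cA S w v b + cW S a w b ≤ cX S i v := by
  unfold cX cA cW
  simp only [← Finset.sum_add_distrib]
  refine Finset.sum_le_sum ?_
  rintro ⟨i, j⟩ he
  have := hS _ he
  simp only at this ⊢
  repeat' first | omega | split

theorem cA_pos {S : Finset (ℕ × ℕ)} {a w b : ℕ} (h : 0 < cA S a w b) : ∃ j, w < j ∧ j < b ∧ (a, j) ∈ S := by
  by_contra hc
  push Not at hc
  have : cA S a w b = 0 := by
    unfold cA
    apply Finset.sum_eq_zero
    rintro ⟨i, j⟩ he
    simp only [ite_eq_right_iff]
    rintro ⟨rfl, h1, h2⟩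
    exact absurd he (hc j h1 h2)
  omega

theorem cB_pos {S : Finset (ℕ × ℕ)} {a w b : ℕ} (h : 0 < cB S a w b) : ∃ i, a < i ∧ i < w ∧ (i, b) ∈ S := by
  by_contra hc
  push Not at hc
  have : cB S a w b = 0 := by
    unfold cB
    apply Finset.sum_eq_zero
    rintro ⟨i, j⟩ he
    simp only [ite_eq_right_iff]
    rintro ⟨rfl, h1, h2⟩
    exact absurd he (hc i h1 h2)
  omega

/-- The inductive inequality. -/
def Good (S : Finset (ℕ × ℕ)) (k a b : ℕ) : Prop :=
  (2 * (cI S a b : ℤ) + cX S a b) ≤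
    ((k : ℤ) + 4) * ((b : ℤ) - a) - k - 3 - cR S a b + max 0 ((cX S a b : ℤ) - k - 1)

theorem comb_step {S : Finset (ℕ × ℕ)} (hS : ∀ e ∈ S, e.1 < e.2) (k a b : ℕ) (hk : ∀ e ∈ S, cX S e.1 e.2 ≤ k) (hab : a + 1 < b)
    (ha : (a, a + 1) ∈ S) (hb : (b - 1, b) ∈ S)
    (ih : ∀ c d, a ≤ c → c < d → d ≤ b → d - c < b - a → Good S k c d) : Good S k a b := by
  classical
  obtain ⟨w, hwm, hwmax⟩ : ∃ w, (a < w ∧ w < b ∧ (a, w) ∈ S) ∧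
      ∀ j, a < j → j < b → (a, j) ∈ S → j ≤ w := by
    have hne : ((Finset.Ioo a b).filter (fun j => (a, j) ∈ S)).Nonempty :=
      ⟨a + 1, by simp [ha, hab]⟩
    obtain ⟨w, h1, h2⟩ := Finset.exists_max_image _ id hne
    simp only [Finset.mem_filter, Finset.mem_Ioo, id] at h1 h2
    exact ⟨w, ⟨h1.1.1, h1.1.2, h1.2⟩, fun j q1 q2 q3 => h2 j ⟨⟨q1, q2⟩, q3⟩⟩
  obtain ⟨v, hvm, hvmin⟩ : ∃ v, (a < v ∧ v < b ∧ (v, b) ∈ S) ∧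
      ∀ j, a < j → j < b → (j, b) ∈ S → v ≤ j := by
    have hne : ((Finset.Ioo a b).filter (fun j => (j, b) ∈ S)).Nonempty :=
      ⟨b - 1, by simp only [Finset.mem_filter, Finset.mem_Ioo]; exact ⟨by omega, hb⟩⟩
    obtain ⟨w, h1, h2⟩ := Finset.exists_min_image _ id hne
    simp only [Finset.mem_filter, Finset.mem_Ioo, id] at h1 h2
    exact ⟨w, ⟨h1.1.1, h1.1.2, h1.2⟩, fun j q1 q2 q3 => h2 j ⟨⟨q1, q2⟩, q3⟩⟩
  obtain ⟨haw, hwb, hawS⟩ := hwm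
  obtain ⟨hav, hvb, hvbS⟩ := hvm
  have hAw : cA S a w b = 0 := by
    by_contra h
    obtain ⟨j, h1, h2, h3⟩ := cA_pos (Nat.pos_of_ne_zero h)
    have := hwmax j (by omega) h2 h3
    omega
  have hBv : cB S a v b = 0 := by
    by_contra h
    obtain ⟨j, h1, h2, h3⟩ := cB_pos (Nat.pos_of_ne_zero h)
    have := hvmin j h1 (by omega) h3
    omega
  have R : ∀ c d, (cR S c d = 1 ∧ cX S c d ≤ k) ∨ cR S c d = 0 := by
    intro c d
    by_cases h : (c, d) ∈ S
    · exact Or.inl ⟨cR_mem h, hk _ h⟩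
    · exact Or.inr (cR_not_mem h)
  have Rab := R a b
  have Raw := cR_mem hawS
  have Rvb := cR_mem hvbS
  have Xaw : cX S a w ≤ k := hk _ hawS
  have Xvb : cX S v b ≤ k := hk _ hvbS
  have Iaw := ih a w le_rfl haw hwb.le (by omega)
  have Iwb := ih w b haw.le hwb le_rfl (by omega)
  have Iav := ih a v le_rfl hav hvb.le (by omega)
  have Ivb := ih v b hav.le hvb le_rfl (by omega)
  have Tw := tri_id hS haw hwb
  have Tv := tri_id hS hav hvb
  have Ww := ineqW hS haw hwb
  unfold Good at *
  have Mw : ((k : ℤ) + 4) * ((b : ℤ) - a) =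
      ((k : ℤ) + 4) * ((w : ℤ) - a) + ((k : ℤ) + 4) * ((b : ℤ) - w) := by ring
  have Mv : ((k : ℤ) + 4) * ((b : ℤ) - a) =
      ((k : ℤ) + 4) * ((v : ℤ) - a) + ((k : ℤ) + 4) * ((b : ℤ) - v) := by ring
  rcases lt_trichotomy w v with hwv | hwv | hwv
  · -- quadrilateral
    have Iwv := ih w v haw.le hwv hvb.le (by omega)
    have Rwb : cR S w b = 0 := by
      apply cR_not_mem
      intro h
      have := hvmin w haw hwb h
      omega
    have hBw : cB S a w b = 0 := by
      by_contra h
      obtain ⟨j, h1, h2, h3⟩ := cB_pos (Nat.pos_of_ne_zero h)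
      have := hvmin j h1 (by omega) h3
      omega
    have hBwv : cB S w v b = 0 := by
      by_contra h
      obtain ⟨j, h1, h2, h3⟩ := cB_pos (Nat.pos_of_ne_zero h)
      have := hvmin j (by omega) (by omega) h3
      omega
    have T2 := tri_id hS hwv hvb
    have Rwv := R w v
    have M2 : ((k : ℤ) + 4) * ((b : ℤ) - w) =
      ((k : ℤ) + 4) * ((v : ℤ) - w) + ((k : ℤ) + 4) * ((b : ℤ) - v) := by ring
    have q1 := quad1 hS haw hwv hvb
    have q2 := quad2 hS haw hwv hvb
    have q3 := quad3 hS haw hwv hvb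
    have key : cA S w v b = 0 ∨ cB S a w v = 0 ∨
        (cA S w v b + cW S a w b + cW S w v b ≤ 2 * k) := by
      by_cases h1 : cA S w v b = 0
      · exact Or.inl h1
      by_cases h2 : cB S a w v = 0
      · exact Or.inr (Or.inl h2)
      obtain ⟨j, j1, j2, j3⟩ := cA_pos (Nat.pos_of_ne_zero h1)
      obtain ⟨i, i1, i2, i3⟩ := cB_pos (Nat.pos_of_ne_zero h2)
      have e1 := quad4 hS hwv j1 j2
      have e2 := quad5 hS i1 i2 hwv hvb
      have e3 : cX S w j ≤ k := hk _ j3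
      have e4 : cX S i v ≤ k := hk _ i3
      omega
    clear Iwb Iav Tv Mv R ih hk
    generalize ((k : ℤ) + 4) * ((b : ℤ) - a) = m1 at *
    generalize ((k : ℤ) + 4) * ((w : ℤ) - a) = m2 at *
    generalize ((k : ℤ) + 4) * ((b : ℤ) - w) = m3 at *
    generalize ((k : ℤ) + 4) * ((v : ℤ) - w) = m4 at *
    generalize ((k : ℤ) + 4) * ((b : ℤ) - v) = m5 at *
    omega
  · subst hwv
    clear R ih hk
    generalize ((k : ℤ) + 4) * ((b : ℤ) - a) = m1 at *
    generalize ((k : ℤ) + 4) * ((w : ℤ) - a) = m2 at *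
    generalize ((k : ℤ) + 4) * ((b : ℤ) - w) = m3 at *
    omega
  · have i1 := ineq1 hS haw hwb
    have i1' := ineq1' hS hav hvb
    have i2 := ineq2 hS hav hwv hwb
    have i2' := ineq2' hS hav hwv hwb
    have Rwb := R w b
    have Rav := R a v
    clear R ih hk
    generalize ((k : ℤ) + 4) * ((b : ℤ) - a) = m1 at *
    generalize ((k : ℤ) + 4) * ((w : ℤ) - a) = m2 at *
    generalize ((k : ℤ) + 4) * ((b : ℤ) - w) = m3 at *
    generalize ((k : ℤ) + 4) * ((v : ℤ) - a) = m4 at *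
    generalize ((k : ℤ) + 4) * ((b : ℤ) - v) = m5 at *
    omega

theorem comb_good {S : Finset (ℕ × ℕ)} (hS : ∀ e ∈ S, e.1 < e.2) (k n : ℕ) (hk : ∀ e ∈ S, cX S e.1 e.2 ≤ k)
    (hh : ∀ i, i + 1 < n → (i, i + 1) ∈ S) :
    ∀ L a b : ℕ, b - a ≤ L → a < b → b < n → Good S k a b := by
  intro L
  induction L with
  | zero => intro a b h1 h2; omega
  | succ L ih =>
    intro a b h1 h2 h3
    by_cases hb : b = a + 1
    · subst hb
      have h := base_id hS a
      have r := cR_mem (hh a h3)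
      unfold Good
      push_cast
      have : ((k : ℤ) + 4) * ((a : ℤ) + 1 - a) = k + 4 := by ring
      rw [this]
      omega
    · refine comb_step hS k a b hk (by omega) (hh a (by omega)) ?_ ?_
      · have := hh (b - 1) (by omega)
        rwa [Nat.sub_add_cancel (by omega)] at this
      · intro c d q1 q2 q3 q4
        exact ih c d (by omega) q2 (by omega)

theorem comb_main {S : Finset (ℕ × ℕ)} (hS : ∀ e ∈ S, e.1 < e.2) (k n : ℕ) (hn : 2 ≤ n) (hSn : ∀ e ∈ S, e.2 < n)
    (hk : ∀ e ∈ S, cX S e.1 e.2 ≤ k)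
    (hh : ∀ i, i + 1 < n → (i, i + 1) ∈ S) :
    2 * (S.card : ℤ) ≤ ((k : ℤ) + 4) * n - 2 * (k + 3) := by
  have g := comb_good hS k n hk hh n 0 (n - 1) (by omega) (by omega) (by omega)
  have x0 : cX S 0 (n - 1) = 0 := by
    unfold cX
    apply Finset.sum_eq_zero
    rintro ⟨i, j⟩ he
    have := hSn _ he
    simp only at this ⊢
    repeat' first | omega | split
  have c0 : S.card = cI S 0 (n - 1) + cR S 0 (n - 1) := by
    unfold cI cR
    rw [Finset.card_eq_sum_ones, ← Finset.sum_add_distrib]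
    refine Finset.sum_congr rfl ?_
    rintro ⟨i, j⟩ he
    have := hSn _ he
    simp only at this ⊢
    repeat' first | omega | split
  have r : cR S 0 (n - 1) ≤ 1 := by
    by_cases h : (0, n - 1) ∈ S
    · rw [cR_mem h]
    · rw [cR_not_mem h]; omega
  unfold Good at g
  have : ((k : ℤ) + 4) * (((n - 1 : ℕ) : ℤ) - (0 : ℕ)) = ((k : ℤ) + 4) * n - k - 4 := by
    rw [Nat.cast_sub (by omega)]; push_cast; ring
  rw [this] at g
  generalize ((k : ℤ) + 4) * n = m at *
  omega


theorem stmt_5 (k : ℕ) (hk : k ≤ 4) (n : ℕ) (hn : 2 ≤ n)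
    (P : Finset Pt) (hP : ConvexPos P) (hcard : P.card = n)
    (E : Set (Sym2 Pt)) (hE : E ⊆ KEdges P) (hkp : KPlane k E) :
    (E.ncard : ℝ) ≤ ((k : ℝ) + 4) / 2 * n - ((k : ℝ) + 3) := by
  classical
  have hne : P.Nonempty := by
    rw [← Finset.card_pos]; omega
  obtain ⟨v, hvP, hvs, hvi, hvc⟩ := exists_order P hP hne
  rw [hcard] at hvP hvs hvi hvc
  let S : Finset (ℕ × ℕ) := ((Finset.range n) ×ˢ (Finset.range n)).filter
    (fun e => e.1 < e.2 ∧ (s(v e.1, v e.2) ∈ E ∨ e.2 = e.1 + 1))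
  have memS : ∀ e, e ∈ S ↔ e.1 < e.2 ∧ e.2 < n ∧ (s(v e.1, v e.2) ∈ E ∨ e.2 = e.1 + 1) := by
    intro e
    simp only [S, Finset.mem_filter, Finset.mem_product, Finset.mem_range]
    constructor
    · rintro ⟨⟨_, h2⟩, h3, h4⟩; exact ⟨h3, h2, h4⟩
    · rintro ⟨h3, h2, h4⟩; exact ⟨⟨by omega, h2⟩, h3, h4⟩
  have hS : ∀ e ∈ S, e.1 < e.2 := fun e he => ((memS e).1 he).1
  have hSn : ∀ e ∈ S, e.2 < n := fun e he => ((memS e).1 he).2.1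
  have hh : ∀ i, i + 1 < n → (i, i + 1) ∈ S := fun i hi => (memS _).2 ⟨by simp, hi, Or.inr rfl⟩
  have hsub : E ⊆ ((S.image (fun e => s(v e.1, v e.2)) : Finset (Sym2 Pt)) : Set (Sym2 Pt)) := by
    intro e he
    obtain ⟨p, hp, q, hq, hpq, rfl⟩ := hE he
    obtain ⟨i, hi, rfl⟩ := hvs p hp
    obtain ⟨j, hj, rfl⟩ := hvs q hq
    simp only [Finset.coe_image, Set.mem_image, Finset.mem_coe]
    rcases lt_trichotomy i j with h | h | h
    · exact ⟨(i, j), (memS _).2 ⟨h, hj, Or.inl he⟩, rfl⟩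
    · exact absurd (congrArg v h) hpq
    · exact ⟨(j, i), (memS _).2 ⟨h, hi, Or.inl (by rw [Sym2.eq_swap]; exact he)⟩, Sym2.eq_swap⟩
  have hfin : E.Finite := (Finset.finite_toSet _).subset hsub
  have hEc : E.ncard ≤ S.card := by
    refine (Set.ncard_le_ncard hsub (Finset.finite_toSet _)).trans ?_
    rw [Set.ncard_coe_finset]
    exact Finset.card_image_le
  have hkS : ∀ e ∈ S, cX S e.1 e.2 ≤ k := by
    rintro ⟨a, b⟩ he
    obtain ⟨hab, hbn, hE'⟩ := (memS _).1 he
    simp only at hab hbn hE' ⊢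
    unfold cX
    rw [← Finset.card_filter]
    by_cases hb : b = a + 1
    · rw [Finset.card_eq_zero.2]
      · omega
      · apply Finset.filter_eq_empty_iff.2
        intro e _; omega
    have hEab : s(v a, v b) ∈ E := hE'.resolve_right hb
    refine le_trans ?_ (hkp _ hEab)
    rw [← Set.ncard_coe_finset]
    refine Set.ncard_le_ncard_of_injOn (fun e => s(v e.1, v e.2)) ?_ ?_
      (hfin.subset (fun f hf => hf.1))
    · rintro ⟨i, j⟩ hij
      simp only [Finset.coe_filter, Set.mem_setOf_eq] at hij
      obtain ⟨hm, hx⟩ := hij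
      obtain ⟨h1, h2, h3⟩ := (memS _).1 hm
      simp only at h1 h2 h3
      refine ⟨h3.resolve_right (by omega), ?_, v a, v b, v i, v j, rfl, rfl, ?_⟩
      · intro x hx1 hx2
        rw [Sym2.mem_iff] at hx1 hx2
        rcases hx1 with rfl | rfl <;> rcases hx2 with h | h
        · have := hvi _ (by omega) _ (by omega) h; omega
        · have := hvi _ (by omega) _ (by omega) h; omega
        · have := hvi _ (by omega) _ (by omega) h; omega
        · have := hvi _ (by omega) _ (by omega) h; omega
      · rcases hx with ⟨g1, g2, g3⟩ | ⟨g1, g2, g3⟩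
        · exact hvc a i b j g1 g2 g3 h2
        · rw [Set.inter_comm]
          exact hvc i a j b g1 g2 g3 hbn
    · rintro ⟨i, j⟩ h1 ⟨i', j'⟩ h2 heq
      simp only [Finset.coe_filter, Set.mem_setOf_eq] at h1 h2
      obtain ⟨a1, a2, -⟩ := (memS _).1 h1.1
      obtain ⟨b1, b2, -⟩ := (memS _).1 h2.1
      simp only at a1 a2 b1 b2 heq
      rw [Sym2.eq_iff] at heq
      rcases heq with ⟨e1, e2⟩ | ⟨e1, e2⟩
      · have := hvi _ (by omega) _ (by omega) e1
        have := hvi _ (by omega) _ (by omega) e2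
        simp [*]
      · have := hvi _ (by omega) _ (by omega) e1
        have := hvi _ (by omega) _ (by omega) e2
        omega
  have main := comb_main hS k n hn hSn hkS hh
  have mainR : 2 * (S.card : ℝ) ≤ ((k : ℝ) + 4) * n - 2 * (k + 3) := by exact_mod_cast main
  have hEcR : (E.ncard : ℝ) ≤ S.card := by exact_mod_cast hEc
  linarith
end
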